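/- Let n ≥ 2 and n' = n/(n−1). There is a constant c depending only on n such that for every f ∈ C_c^∞(ℝⁿ) and every x ∈ ℝⁿ, M_{n'}f(x) ≤ c · I₁(|∇f|)(x), where M_{n'}f = (M(|f|^{n'}))^{1/n'}. -/

import Mathlib

/-!
After translation the maximal function is evaluated at the origin. A cube of side `h` containing the
origin lies in the ball of radius `R = √n h`, so it suffices to prove the local estimate
`‖g‖_{L^{n'}(B_R)} ≤ A R^{n-1} I₁(|∇g|)(0)` (`sobolev_ball`); dividing by
`|Q|^{1/n'} = h^{n-1}` removes the scale.

The local estimate is the Gagliardo–Nirenberg–Sobolev inequality for `g · φ(·/R)` with a fixed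
cutoff `φ`. The term carrying `∇g` is `∫_{B_{2R}} |∇g|`, bounded by
`(2R)^{n-1} I₁(|∇g|)(0)` because the kernel is at least `(2R)^{-(n-1)}` there (`gradient_ball`). The
term carrying `∇φ` is of size `R⁻¹ ∫_{B_{2R}} |g|`, and `hardy_ball` bounds that integral by
`(2R)^n I₁(|∇g|)(0)`: write `|g(v)| ≤ ∫_1^∞ |∇g(tv)| |v| dt`, integrate over the ball and
substitute `w = t v`.
-/

open MeasureTheory ENNReal Filter Set

noncomputable section

/-- `ℝⁿ` with the Euclidean structure. -/
abbrev En (n : ℕ) := EuclideanSpace ℝ (Fin n)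

/-- Axis-parallel closed cube with corner `a` and side length `h`. -/
def cube {n : ℕ} (a : En n) (h : ℝ) : Set (En n) := {y | ∀ i, a i ≤ y i ∧ y i ≤ a i + h}

/-- Riesz potential of order `1` of a (nonnegative) function:
`I₁ g (x) = ∫ g(y) |x-y|^{-(n-1)} dy`. -/
def riesz (n : ℕ) (g : En n → ℝ) (x : En n) : ℝ≥0∞ :=
  ∫⁻ y, ENNReal.ofReal (g y) * ENNReal.ofReal (‖x - y‖ ^ (-((n : ℝ) - 1)))

/-- The quantity `(∫ g^p dμ)^{1/p}` for an `ℝ≥0∞`-valued function `g`. -/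
def lpNorm {α : Type*} [MeasurableSpace α] (p : ℝ) (g : α → ℝ≥0∞) (μ : Measure α) : ℝ≥0∞ :=
  (∫⁻ x, g x ^ p ∂μ) ^ (1 / p)

/-- Average `⨍_Q g` of an `ℝ≥0∞`-valued function over a set `Q`. -/
def avgE {n : ℕ} (g : En n → ℝ≥0∞) (Q : Set (En n)) : ℝ≥0∞ :=
  (volume Q)⁻¹ * ∫⁻ x in Q, g x

/-- The `A_{p,p*}` constant of a weight `w`; here `ps` plays the role of `p*` and
`pp` that of `p' = p/(p-1)`:
`[w]_{A_{p,p*}} = sup_Q (⨍_Q w^{p*}) (⨍_Q w^{-p'})^{p*/p'}`. -/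
def Apq (n : ℕ) (ps pp : ℝ) (w : En n → ℝ) : ℝ≥0∞ :=
  ⨆ (a : En n) (h : ℝ) (_ : 0 < h),
    avgE (fun x => ENNReal.ofReal (w x) ^ ps) (cube a h) *
      avgE (fun x => ENNReal.ofReal (w x) ^ (-pp)) (cube a h) ^ (ps / pp)

/-- The `A_{1,s}` constant of a weight `w`: the least `c` such that
`⨍_Q w^s ≤ c · essinf_Q w^s` for every cube `Q`. -/
def A1C (n : ℕ) (s : ℝ) (w : En n → ℝ) : ℝ≥0∞ :=
  sInf {c : ℝ≥0∞ | ∀ (a : En n) (h : ℝ), 0 < h →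
    avgE (fun x => ENNReal.ofReal (w x) ^ s) (cube a h) ≤
      c * essInf (fun x => ENNReal.ofReal (w x) ^ s) (volume.restrict (cube a h))}

/-- Hardy–Littlewood maximal operator over axis-parallel cubes containing `x`. -/
def maximal (n : ℕ) (g : En n → ℝ≥0∞) (x : En n) : ℝ≥0∞ :=
  ⨆ (a : En n) (h : ℝ) (_ : 0 < h) (_ : x ∈ cube a h), avgE g (cube a h)

/-- Weak `L^s` quasinorm `sup_{t>0} t · μ{|g|>t}^{1/s}` of a real function. -/
def wnormR {α : Type*} [MeasurableSpace α] (s : ℝ) (g : α → ℝ) (μ : Measure α) : ℝ≥0∞ :=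
  ⨆ (t : ℝ) (_ : 0 < t), ENNReal.ofReal t * μ {x | t < |g x|} ^ (1 / s)

/-- Fundamental theorem of calculus along the ray from `v` to infinity. -/
theorem enorm_le_ray {n : ℕ} {g : En n → ℝ} (hg : ContDiff ℝ 1 g) (hc : HasCompactSupport g)
    {v : En n} (hv : v ≠ 0) :
    ‖g v‖ₑ ≤ ∫⁻ t in Ici (1 : ℝ), ‖fderiv ℝ g (t • v)‖ₑ * ‖v‖ₑ := by
  -- Mathlib's one-dimensional bound integrates from `-∞`, so the ray is run backwards, `s = -t`.
  have hnv : -v ≠ 0 := neg_ne_zero.mpr hv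
  have h1 : ContDiff ℝ 1 (fun s : ℝ => g (s • -v)) := by fun_prop
  have h2 : HasCompactSupport (fun s : ℝ => g (s • -v)) :=
    hc.comp_isClosedEmbedding (isClosedEmbedding_smul_left hnv)
  have h3 := h2.enorm_le_lintegral_Ici_deriv h1 (-1)
  have h4 : ∀ s : ℝ, ‖deriv (fun s : ℝ => g (s • -v)) s‖ₑ
      ≤ ‖fderiv ℝ g ((-s) • v)‖ₑ * ‖v‖ₑ := by
    intro s
    have hd : HasDerivAt (fun s : ℝ => g (s • -v)) (fderiv ℝ g (s • -v) (-v)) s := by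
      have := ((hg.differentiable one_ne_zero) (s • -v)).hasFDerivAt.comp_hasDerivAt s
        ((hasDerivAt_id s).smul_const (-v))
      rw [one_smul] at this
      exact this
    rw [hd.deriv]
    refine ((fderiv ℝ g (s • -v)).le_opENorm (-v)).trans_eq ?_
    rw [enorm_neg, smul_neg, neg_smul]
  calc ‖g v‖ₑ ≤ ∫⁻ s in Iic (-1 : ℝ), ‖deriv (fun s : ℝ => g (s • -v)) s‖ₑ := by simpa using h3
    _ ≤ ∫⁻ s in Iic (-1 : ℝ), ‖fderiv ℝ g ((-s) • v)‖ₑ * ‖v‖ₑ := lintegral_mono fun s => h4 s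
    _ = ∫⁻ t in Ici (1 : ℝ), ‖fderiv ℝ g (t • v)‖ₑ * ‖v‖ₑ := by
      have := (Measure.measurePreserving_neg (volume : Measure ℝ)).setLIntegral_comp_preimage_emb
        (MeasurableEquiv.neg ℝ).measurableEmbedding
        (fun t => ‖fderiv ℝ g (t • v)‖ₑ * ‖v‖ₑ) (Ici 1)
      rw [← this]
      congr 2
      ext s; simp [le_neg]

theorem lintegral_tail {n : ℕ} (hn : 2 ≤ n) {c : ℝ} (hc : 0 < c) :
    ∫⁻ t in Ici c, ENNReal.ofReal (t ^ (-(n : ℝ) - 1)) ≤ ENNReal.ofReal (c ^ (-(n : ℝ))) := by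
  have hn' : (2 : ℝ) ≤ n := by exact_mod_cast hn
  rw [setLIntegral_congr Ioi_ae_eq_Ici.symm,
    ← ofReal_integral_eq_lintegral_ofReal (integrableOn_Ioi_rpow_of_lt (by linarith) hc)
      ((ae_restrict_iff' measurableSet_Ioi).mpr (ae_of_all _ fun t ht =>
        Real.rpow_nonneg (hc.trans ht).le _)), integral_Ioi_rpow_of_lt (by linarith) hc]
  apply ENNReal.ofReal_le_ofReal
  rw [show -(n : ℝ) - 1 + 1 = -n by ring, neg_div_neg_eq]
  exact div_le_self (Real.rpow_nonneg hc.le _) (by linarith)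

theorem lintegral_scale {n : ℕ} {t : ℝ} (ht : 0 < t) {H : En n → ℝ≥0∞} (hH : Measurable H) :
    ∫⁻ v, H (t • v) = ENNReal.ofReal (t ^ (-(n : ℝ))) * ∫⁻ w, H w := by
  rw [← lintegral_map (f := H) hH (measurable_const_smul t),
    Measure.map_addHaar_smul _ ht.ne', lintegral_smul_measure, smul_eq_mul]
  congr 2
  rw [abs_of_pos (by positivity), finrank_euclideanSpace_fin, Real.rpow_neg ht.le,
    Real.rpow_natCast]

/-- A Hardy-type inequality: the integral of `|g|` over the ball of radius `R` about the origin is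
at most `R^n · I₁(|∇g|)(0)`. Integrate `enorm_le_ray` over the ball, substitute `w = t v`, and
integrate out `t ≥ ‖w‖/R`. -/
theorem hardy_ball {n : ℕ} (hn : 2 ≤ n) {g : En n → ℝ} (hg : ContDiff ℝ 1 g)
    (hc : HasCompactSupport g) {R : ℝ} (hR : 0 < R) :
    ∫⁻ v in Metric.closedBall 0 R, ‖g v‖ₑ ≤ ENNReal.ofReal (R ^ n) *
      ∫⁻ w, ‖fderiv ℝ g w‖ₑ * ENNReal.ofReal (‖w‖ ^ (-((n : ℝ) - 1))) := by
  have : Nonempty (Fin n) := ⟨⟨0, by omega⟩⟩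
  have : NeZero n := ⟨by omega⟩
  have hGc : Continuous (fderiv ℝ g) := hg.continuous_fderiv one_ne_zero
  have hGm : Measurable fun w => ‖fderiv ℝ g w‖ₑ := hGc.enorm.measurable
  have hne : ∀ᵐ v : En n, v ≠ 0 := by
    simp [ae_iff, measure_singleton]
  -- The integrand in `(t, w)` after `w = t v`; the weight `t^{-n-1}` is the Jacobian `t^{-n}` times
  -- the factor `t⁻¹` from `‖v‖ = ‖w‖ / t`.
  let K : ℝ → En n → ℝ≥0∞ := fun t w =>
    {p : ℝ × En n | ‖p.2‖ ≤ p.1 * R}.indicator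
      (fun p => ‖fderiv ℝ g p.2‖ₑ * ‖p.2‖ₑ * ENNReal.ofReal (p.1 ^ (-(n : ℝ) - 1))) (t, w)
  have hK : Measurable (Function.uncurry K) := by
    refine Measurable.indicator ?_ (measurableSet_le (by fun_prop) (by fun_prop))
    exact ((hGm.comp measurable_snd).mul (by fun_prop)).mul (by fun_prop)
  calc ∫⁻ v in Metric.closedBall 0 R, ‖g v‖ₑ
      ≤ ∫⁻ v in Metric.closedBall 0 R, ∫⁻ t in Ici (1 : ℝ), ‖fderiv ℝ g (t • v)‖ₑ * ‖v‖ₑ :=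
        lintegral_mono_ae ((ae_restrict_of_ae hne).mono fun v hv => enorm_le_ray hg hc hv)
    _ = ∫⁻ t in Ici (1 : ℝ), ∫⁻ v in Metric.closedBall 0 R, ‖fderiv ℝ g (t • v)‖ₑ * ‖v‖ₑ := by
        apply lintegral_lintegral_swap
        apply Measurable.aemeasurable
        exact (hGm.comp (measurable_snd.smul measurable_fst)).mul (by fun_prop)
    _ = ∫⁻ t in Ici (1 : ℝ), ∫⁻ w, K t w := by
        refine setLIntegral_congr_fun measurableSet_Ici fun t ht => ?_
        have ht0 : 0 < t := lt_of_lt_of_le one_pos ht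
        have hH : Measurable fun w : En n => (Metric.closedBall (0 : En n) (t * R)).indicator
            (fun w => ‖fderiv ℝ g w‖ₑ * ‖w‖ₑ * ENNReal.ofReal t⁻¹) w :=
          ((hGm.mul (by fun_prop)).mul_const _).indicator Metric.isClosed_closedBall.measurableSet
        have h1 := lintegral_scale ht0 hH
        rw [← lintegral_const_mul _ hH] at h1
        have h2 : ∀ w, ENNReal.ofReal (t ^ (-(n : ℝ))) *
            (Metric.closedBall (0 : En n) (t * R)).indicator
            (fun w => ‖fderiv ℝ g w‖ₑ * ‖w‖ₑ * ENNReal.ofReal t⁻¹) w = K t w := by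
          intro w
          by_cases hw : ‖w‖ ≤ t * R
          · have hk : K t w = ‖fderiv ℝ g w‖ₑ * ‖w‖ₑ * ENNReal.ofReal (t ^ (-(n : ℝ) - 1)) :=
              indicator_of_mem (show (t, w) ∈ {p : ℝ × En n | ‖p.2‖ ≤ p.1 * R} from hw) _
            rw [hk, indicator_of_mem (by simpa using hw), Real.rpow_sub ht0, Real.rpow_one,
              div_eq_mul_inv, ENNReal.ofReal_mul (by positivity)]
            ring
          · have hk : K t w = 0 :=
              indicator_of_notMem (show (t, w) ∉ {p : ℝ × En n | ‖p.2‖ ≤ p.1 * R} from hw) _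
            rw [hk, indicator_of_notMem (by simpa using hw), mul_zero]
        simp_rw [h2] at h1
        rw [← h1, ← lintegral_indicator Metric.isClosed_closedBall.measurableSet]
        refine lintegral_congr fun v => ?_
        by_cases hv : ‖v‖ ≤ R
        · have hv' : ‖t • v‖ ≤ t * R := by
            rw [norm_smul, Real.norm_of_nonneg ht0.le]; gcongr
          rw [indicator_of_mem (by simpa using hv), indicator_of_mem (by simpa using hv'),
            enorm_smul, Real.enorm_of_nonneg ht0.le, ENNReal.ofReal_inv_of_pos ht0]
          have e : ENNReal.ofReal t * (ENNReal.ofReal t)⁻¹ = 1 :=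
            ENNReal.mul_inv_cancel (by simpa using ht0) ENNReal.ofReal_ne_top
          calc _ = ‖fderiv ℝ g (t • v)‖ₑ * ‖v‖ₑ * (ENNReal.ofReal t * (ENNReal.ofReal t)⁻¹) := by
                rw [e, mul_one]
            _ = _ := by ring
        · have hv' : ¬ ‖t • v‖ ≤ t * R := by
            rw [norm_smul, Real.norm_of_nonneg ht0.le]
            exact fun h => hv (le_of_mul_le_mul_left h ht0)
          rw [indicator_of_notMem (by simpa using hv), indicator_of_notMem (by simpa using hv')]
    _ = ∫⁻ w, ∫⁻ t in Ici (1 : ℝ), K t w := lintegral_lintegral_swap hK.aemeasurable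
    _ ≤ ∫⁻ w, ENNReal.ofReal (R ^ n) *
          (‖fderiv ℝ g w‖ₑ * ENNReal.ofReal (‖w‖ ^ (-((n : ℝ) - 1)))) := by
        refine lintegral_mono_ae (hne.mono fun w hw => ?_)
        have hw0 : 0 < ‖w‖ := norm_pos_iff.mpr hw
        have hwR : 0 < ‖w‖ / R := by positivity
        have h1 : ∀ t, K t w ≤ (Ici (‖w‖ / R)).indicator (fun t : ℝ =>
            ‖fderiv ℝ g w‖ₑ * ‖w‖ₑ * ENNReal.ofReal (t ^ (-(n : ℝ) - 1))) t := by
          intro t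
          refine le_of_eq ?_
          have : (t, w) ∈ {p : ℝ × En n | ‖p.2‖ ≤ p.1 * R} ↔ t ∈ Ici (‖w‖ / R) := by
            simp [div_le_iff₀ hR]
          simp only [K, indicator, this]
        calc ∫⁻ t in Ici (1 : ℝ), K t w ≤ ∫⁻ t, K t w := setLIntegral_le_lintegral _ _
          _ ≤ _ := lintegral_mono h1
          _ = ‖fderiv ℝ g w‖ₑ * ‖w‖ₑ *
              ∫⁻ t in Ici (‖w‖ / R), ENNReal.ofReal (t ^ (-(n : ℝ) - 1)) := by
            rw [lintegral_indicator measurableSet_Ici, lintegral_const_mul _ (by fun_prop)]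
          _ ≤ ‖fderiv ℝ g w‖ₑ * ‖w‖ₑ * ENNReal.ofReal ((‖w‖ / R) ^ (-(n : ℝ))) := by
            gcongr
            exact lintegral_tail hn hwR
          _ = _ := by
            have e : ‖w‖ * (‖w‖ / R) ^ (-(n : ℝ)) = R ^ n * ‖w‖ ^ (-((n : ℝ) - 1)) := by
              rw [show -((n : ℝ) - 1) = -(n : ℝ) + 1 by ring, Real.rpow_add hw0, Real.rpow_one,
                Real.div_rpow hw0.le hR.le, Real.rpow_neg hR.le, Real.rpow_natCast]
              field_simp
            rw [← ofReal_norm w, mul_assoc, ← ENNReal.ofReal_mul hw0.le, e,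
              ENNReal.ofReal_mul (by positivity)]
            ring
    _ = _ := by
        rw [lintegral_const_mul]
        exact hGm.mul (by fun_prop)

/-- The Riesz potential `I₁(|∇g|)` at the origin, with `|∇g|` as an extended norm. -/
def rieszZero (n : ℕ) (g : En n → ℝ) : ℝ≥0∞ :=
  ∫⁻ w, ‖fderiv ℝ g w‖ₑ * ENNReal.ofReal (‖w‖ ^ (-((n : ℝ) - 1)))

/-- A cutoff equal to `1` on the unit ball and vanishing off the ball of radius `2`. It is rescaled
rather than re-chosen at each radius, so its gradient bound depends on `n` only. -/
theorem exists_cutoff (n : ℕ) : ∃ (φ : En n → ℝ) (K : ℝ), 0 ≤ K ∧ ContDiff ℝ 1 φ ∧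
    (∀ y, ‖y‖ ≤ 1 → φ y = 1) ∧ (∀ y, ‖φ y‖ ≤ 1) ∧
    (∀ y, 2 < ‖y‖ → φ y = 0) ∧ (∀ y, ‖fderiv ℝ φ y‖ ≤ K) := by
  let b : ContDiffBump (0 : En n) := ⟨1, 2, one_pos, one_lt_two⟩
  have hb : ContDiff ℝ 1 b := b.contDiff
  obtain ⟨K, hK⟩ := (hb.continuous_fderiv one_ne_zero).bounded_above_of_compact_support
    (b.hasCompactSupport.fderiv ℝ)
  refine ⟨b, K, (norm_nonneg _).trans (hK 0), hb, fun y hy => ?_, fun y => ?_, fun y hy => ?_, hK⟩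
  · exact b.one_of_mem_closedBall (by simpa [b] using hy)
  · rw [Real.norm_of_nonneg b.nonneg]; exact b.le_one
  · exact b.zero_of_le_dist (by simpa [b] using hy.le)

/-- On the ball of radius `R` the kernel `|w|^{-(n-1)}` is at least `R^{-(n-1)}`. -/
theorem gradient_ball {n : ℕ} (hn : 2 ≤ n) {g : En n → ℝ} (hg : ContDiff ℝ 1 g)
    {R : ℝ} (hR : 0 < R) :
    ∫⁻ v in Metric.closedBall 0 R, ‖fderiv ℝ g v‖ₑ
      ≤ ENNReal.ofReal (R ^ (n - 1)) * rieszZero n g := by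
  have : NeZero n := ⟨by omega⟩
  have hGm : Measurable fun w => ‖fderiv ℝ g w‖ₑ :=
    (hg.continuous_fderiv one_ne_zero).enorm.measurable
  have hne : ∀ᵐ v : En n, v ≠ 0 := by simp [ae_iff, measure_singleton]
  have hm : Measurable fun w : En n =>
      ‖fderiv ℝ g w‖ₑ * ENNReal.ofReal (‖w‖ ^ (-((n : ℝ) - 1))) := hGm.mul (by fun_prop)
  rw [rieszZero, ← lintegral_const_mul _ hm,
    ← lintegral_indicator Metric.isClosed_closedBall.measurableSet]
  refine lintegral_mono_ae (hne.mono fun w hw => ?_)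
  have hw0 : 0 < ‖w‖ := norm_pos_iff.mpr hw
  by_cases hwR : ‖w‖ ≤ R
  swap
  · rw [indicator_of_notMem (by simpa using hwR)]
    exact bot_le
  rw [indicator_of_mem (by simpa using hwR)]
  have e : 1 ≤ R ^ (n - 1) * ‖w‖ ^ (-((n : ℝ) - 1)) := by
    rw [Real.rpow_neg hw0.le, show ((n : ℝ) - 1) = ((n - 1 : ℕ) : ℝ) by
      rw [Nat.cast_sub (by omega)]; simp, Real.rpow_natCast, ← div_eq_mul_inv,
      one_le_div (by positivity)]
    gcongr
  calc ‖fderiv ℝ g w‖ₑ = ‖fderiv ℝ g w‖ₑ * 1 := (mul_one _).symm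
    _ ≤ ‖fderiv ℝ g w‖ₑ * ENNReal.ofReal (R ^ (n - 1) * ‖w‖ ^ (-((n : ℝ) - 1))) := by
      gcongr
      exact ENNReal.one_le_ofReal.mpr e
    _ = _ := by rw [ENNReal.ofReal_mul (by positivity)]; ring

/-- Scale-invariant local Sobolev inequality: the Gagliardo–Nirenberg–Sobolev inequality applied to
`g · φ(·/R)`, the two terms of the product rule being controlled by `gradient_ball` and
`hardy_ball`. -/
theorem sobolev_ball (n : ℕ) (hn : 2 ≤ n) : ∃ A : ℝ, 0 ≤ A ∧ ∀ g : En n → ℝ, ContDiff ℝ 1 g →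
    HasCompactSupport g → ∀ R : ℝ, 0 < R →
    (∫⁻ v in Metric.closedBall 0 R, ‖g v‖ₑ ^ ((n : ℝ) / (n - 1))) ^ (((n : ℝ) - 1) / n)
      ≤ ENNReal.ofReal (A * R ^ (n - 1)) * rieszZero n g := by
  have hn' : (2 : ℝ) ≤ n := by exact_mod_cast hn
  have hp0 : (0 : ℝ) < n / (n - 1) := div_pos (by linarith) (by linarith)
  obtain ⟨φ, K, hK0, hφ, hφ1, hφle, hφ0, hφK⟩ := exists_cutoff n
  let p : NNReal := ⟨(n : ℝ) / (n - 1), hp0.le⟩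
  let S : NNReal := eLpNormLESNormFDerivOneConst (volume : Measure (En n)) p
  have hp : NNReal.HolderConjugate (Module.finrank ℝ (En n)) p := by
    rw [← NNReal.holderConjugate_coe_iff, finrank_euclideanSpace_fin]
    exact Real.HolderConjugate.conjExponent (p := (n : ℝ)) (by linarith)
  refine ⟨S * (2 ^ (n - 1) + K * 2 ^ n), by positivity, fun g hg hc R hR => ?_⟩
  let u : En n → ℝ := fun v => g v * φ (R⁻¹ • v)
  have hψ : ContDiff ℝ 1 fun v : En n => φ (R⁻¹ • v) := by fun_prop
  have hu : ContDiff ℝ 1 u := hg.mul hψ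
  have huc : HasCompactSupport u := hc.mul_right
  have hscale : ∀ v : En n, ‖R⁻¹ • v‖ = ‖v‖ / R := fun v => by
    rw [norm_smul, norm_inv, Real.norm_of_nonneg hR.le, inv_mul_eq_div]
  have hu1 : ∀ v : En n, ‖v‖ ≤ R → u v = g v := fun v hv => by
    have : φ (R⁻¹ • v) = 1 := hφ1 _ (by rw [hscale]; exact (div_le_one hR).mpr hv)
    simp [u, this]
  have hdu0 : ∀ v : En n, 2 * R < ‖v‖ → fderiv ℝ u v = 0 := fun v hv => by
    have : u =ᶠ[nhds v] fun _ => 0 := by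
      filter_upwards [(isOpen_lt continuous_const continuous_norm).mem_nhds hv] with w hw
      have : φ (R⁻¹ • w) = 0 := hφ0 _ (by rw [hscale]; exact (lt_div_iff₀ hR).mpr hw)
      simp [u, this]
    rw [this.fderiv_eq]; simp
  have hdu : ∀ v : En n, ‖fderiv ℝ u v‖ₑ ≤ ‖fderiv ℝ g v‖ₑ + ENNReal.ofReal (K / R) * ‖g v‖ₑ := by
    intro v
    have h1 : fderiv ℝ u v = g v • R⁻¹ • fderiv ℝ φ (R⁻¹ • v) + φ (R⁻¹ • v) • fderiv ℝ g v := by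
      rw [← fderiv_comp_smul]
      exact fderiv_mul (hg.differentiable one_ne_zero v) (hψ.differentiable one_ne_zero v)
    have h2 : ‖fderiv ℝ u v‖ ≤ ‖fderiv ℝ g v‖ + K / R * ‖g v‖ := by
      rw [h1, add_comm]
      refine (norm_add_le _ _).trans (add_le_add ?_ ?_)
      · rw [norm_smul]; exact mul_le_of_le_one_left (norm_nonneg _) (hφle _)
      · rw [norm_smul, norm_smul, norm_inv, Real.norm_of_nonneg hR.le, mul_comm, div_eq_inv_mul]
        gcongr
        exact hφK _
    rw [← ofReal_norm, ← ofReal_norm, ← ofReal_norm, ← ENNReal.ofReal_mul (by positivity),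
      ← ENNReal.ofReal_add (by positivity) (by positivity)]
    exact ENNReal.ofReal_le_ofReal h2
  have hR2 : 0 < 2 * R := by positivity
  have hmain : ∫⁻ v, ‖fderiv ℝ u v‖ₑ ≤
      ENNReal.ofReal ((2 ^ (n - 1) + K * 2 ^ n) * R ^ (n - 1)) * rieszZero n g := by
    calc ∫⁻ v, ‖fderiv ℝ u v‖ₑ
        ≤ ∫⁻ v in Metric.closedBall 0 (2 * R),
            (‖fderiv ℝ g v‖ₑ + ENNReal.ofReal (K / R) * ‖g v‖ₑ) := by
          rw [← lintegral_indicator Metric.isClosed_closedBall.measurableSet]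
          refine lintegral_mono fun v => ?_
          by_cases hv : ‖v‖ ≤ 2 * R
          · rw [indicator_of_mem (by simpa using hv)]; exact hdu v
          · rw [hdu0 v (not_le.mp hv), ← ofReal_norm, norm_zero, ENNReal.ofReal_zero]
            exact bot_le
      _ = (∫⁻ v in Metric.closedBall 0 (2 * R), ‖fderiv ℝ g v‖ₑ) +
            ENNReal.ofReal (K / R) * ∫⁻ v in Metric.closedBall 0 (2 * R), ‖g v‖ₑ := by
          rw [lintegral_add_left (hg.continuous_fderiv one_ne_zero).enorm.measurable,
            lintegral_const_mul _ hg.continuous.enorm.measurable]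
      _ ≤ ENNReal.ofReal ((2 * R) ^ (n - 1)) * rieszZero n g +
            ENNReal.ofReal (K / R) * (ENNReal.ofReal ((2 * R) ^ n) * rieszZero n g) := by
          gcongr
          · exact gradient_ball hn hg hR2
          · exact hardy_ball hn hg hc hR2
      _ = _ := by
          rw [← mul_assoc, ← ENNReal.ofReal_mul (by positivity), ← add_mul,
            ← ENNReal.ofReal_add (by positivity) (by positivity)]
          congr 2
          obtain ⟨m, rfl⟩ : ∃ m, n = m + 1 := ⟨n - 1, by omega⟩
          simp only [Nat.add_sub_cancel]
          field_simp
          ring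
  have hS := eLpNorm_le_eLpNorm_fderiv_one (volume : Measure (En n)) hu huc hp
  rw [eLpNorm_one_eq_lintegral_enorm, eLpNorm_nnreal_eq_lintegral hp.symm.pos.ne'] at hS
  calc (∫⁻ v in Metric.closedBall 0 R, ‖g v‖ₑ ^ ((n : ℝ) / (n - 1))) ^ (((n : ℝ) - 1) / n)
      ≤ (∫⁻ v, ‖u v‖ₑ ^ (p : ℝ)) ^ (1 / (p : ℝ)) := by
        have e : 1 / (p : ℝ) = ((n : ℝ) - 1) / n := one_div_div _ _
        rw [e]
        refine ENNReal.rpow_le_rpow ?_ (div_nonneg (by linarith) (by linarith))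
        refine le_trans (le_of_eq ?_) (setLIntegral_le_lintegral (Metric.closedBall 0 R) _)
        refine setLIntegral_congr_fun Metric.isClosed_closedBall.measurableSet fun v hv => ?_
        rw [hu1 v (by simpa using hv)]
        rfl
    _ ≤ (S : ℝ≥0∞) * ∫⁻ v, ‖fderiv ℝ u v‖ₑ := hS
    _ ≤ (S : ℝ≥0∞) *
        (ENNReal.ofReal ((2 ^ (n - 1) + K * 2 ^ n) * R ^ (n - 1)) * rieszZero n g) := by gcongr
    _ = _ := by
        rw [← mul_assoc, ← ENNReal.ofReal_coe_nnreal, ← ENNReal.ofReal_mul (by positivity),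
          mul_assoc (S : ℝ)]

theorem volume_cube {n : ℕ} (a : En n) {h : ℝ} :
    volume (cube a h) = ENNReal.ofReal h ^ n := by
  have e : cube a h = (WithLp.ofLp : En n → Fin n → ℝ) ⁻¹'
      Icc (WithLp.ofLp a) (fun i => a i + h) := by
    ext y; simp [cube, Pi.le_def, forall_and]
  rw [e, (PiLp.volume_preserving_ofLp (Fin n)).measure_preimage
    measurableSet_Icc.nullMeasurableSet, Real.volume_Icc_pi]
  simp

theorem cube_subset_closedBall {n : ℕ} {a x : En n} {h : ℝ} (hh : 0 < h) (hx : x ∈ cube a h) :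
    cube a h ⊆ Metric.closedBall x (√n * h) := by
  intro y hy
  rw [Metric.mem_closedBall, EuclideanSpace.dist_eq]
  have : ∑ i, dist (y i) (x i) ^ 2 ≤ ∑ _i : Fin n, h ^ 2 := by
    refine Finset.sum_le_sum fun i _ => ?_
    gcongr
    rw [Real.dist_eq, abs_le]
    constructor <;> linarith [(hx i).1, (hx i).2, (hy i).1, (hy i).2]
  refine (Real.sqrt_le_sqrt this).trans_eq ?_
  simp [Real.sqrt_sq hh.le]

/-- pointwise bound `M_{n'}f(x) ≤ c · I₁(|∇f|)(x)` for `f ∈ C_c^∞(ℝⁿ)`,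
where `M_{n'}f = (M(|f|^{n'}))^{1/n'}` and `n' = n/(n-1)`. -/
theorem statement9 (n : ℕ) (hn : 2 ≤ n) :
    ∃ c : ℝ, 0 < c ∧ ∀ f : En n → ℝ, ContDiff ℝ (⊤ : ℕ∞) f → HasCompactSupport f →
      ∀ x : En n,
        maximal n (fun y => ENNReal.ofReal (|f y| ^ ((n : ℝ) / (n - 1)))) x ^
            (((n : ℝ) - 1) / n) ≤
          ENNReal.ofReal c * riesz n (fun y => ‖fderiv ℝ f y‖) x := by
  obtain ⟨A, hA, hsob⟩ := sobolev_ball n hn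
  have hn' : (2 : ℝ) ≤ n := by exact_mod_cast hn
  have hq0 : (0 : ℝ) < (n - 1) / n := div_pos (by linarith) (by linarith)
  refine ⟨A * √n ^ (n - 1) + 1, by positivity, fun f hf hfc x => ?_⟩
  -- Translate so that the point `x` becomes the origin.
  let g : En n → ℝ := fun v => f (x + v)
  have hg : ContDiff ℝ 1 g := by
    have : ContDiff ℝ 1 f := hf.of_le (by exact_mod_cast le_top)
    fun_prop
  have hgc : HasCompactSupport g := hfc.comp_homeomorph (Homeomorph.addLeft x)
  have hrz : rieszZero n g = riesz n (fun y => ‖fderiv ℝ f y‖) x := by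
    rw [riesz, ← lintegral_add_left_eq_self _ x, rieszZero]
    refine lintegral_congr fun w => ?_
    simp [g, fderiv_comp_add_left]
  rw [← hrz, ← ENNReal.le_rpow_inv_iff hq0]
  refine iSup_le fun a => iSup_le fun h => iSup_le fun hh => iSup_le fun hx => ?_
  rw [ENNReal.le_rpow_inv_iff hq0, avgE, ENNReal.mul_rpow_of_nonneg _ _ hq0.le,
    volume_cube]
  have hR : 0 < √n * h := by positivity
  have h1 : ∫⁻ y in cube a h, ENNReal.ofReal (|f y| ^ ((n : ℝ) / (n - 1))) ≤
      ∫⁻ v in Metric.closedBall 0 (√n * h), ‖g v‖ₑ ^ ((n : ℝ) / (n - 1)) := by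
    calc _ ≤ ∫⁻ y in Metric.closedBall x (√n * h), ‖f y‖ₑ ^ ((n : ℝ) / (n - 1)) := by
          refine (lintegral_mono_set (cube_subset_closedBall hh hx)).trans_eq ?_
          refine lintegral_congr fun y => ?_
          rw [← ENNReal.ofReal_rpow_of_nonneg (abs_nonneg _)
            (div_nonneg (by linarith) (by linarith)), ← Real.norm_eq_abs, ofReal_norm]
      _ = _ := by
          rw [← lintegral_indicator Metric.isClosed_closedBall.measurableSet,
            ← lintegral_indicator Metric.isClosed_closedBall.measurableSet,
            ← lintegral_add_left_eq_self _ x]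
          refine lintegral_congr fun v => ?_
          simp [indicator, g]
  have h2 : ((ENNReal.ofReal h ^ n)⁻¹) ^ (((n : ℝ) - 1) / n) = ENNReal.ofReal ((h ^ (n - 1))⁻¹) := by
    rw [← ENNReal.ofReal_pow hh.le, ← ENNReal.ofReal_inv_of_pos (by positivity),
      ENNReal.ofReal_rpow_of_pos (by positivity), Real.inv_rpow (by positivity),
      ← Real.rpow_natCast, ← Real.rpow_mul hh.le, mul_div_cancel₀ _ (by linarith),
      ← Real.rpow_natCast h (n - 1), Nat.cast_sub (by omega), Nat.cast_one]
  calc _ ≤ ENNReal.ofReal ((h ^ (n - 1))⁻¹) *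
        (ENNReal.ofReal (A * (√n * h) ^ (n - 1)) * rieszZero n g) := by
        rw [h2]
        gcongr
        exact (ENNReal.rpow_le_rpow h1 hq0.le).trans (hsob g hg hgc _ hR)
    _ = ENNReal.ofReal (A * √n ^ (n - 1)) * rieszZero n g := by
        rw [← mul_assoc, ← ENNReal.ofReal_mul (by positivity)]
        congr 2
        rw [mul_pow]
        field_simp
    _ ≤ _ := by
        gcongr
        linarith
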